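/- Eventual periodicity of LSB: for every nonempty digit string s, the sequence s, Z(s), Z^2(s), ... is eventually periodic with period at most 9, where for strings with run lengths exceeding 9 the run length n is written out in its decimal digits followed by the digit a (treating max(n,a) = n when n > 9). -/

import Mathlib

/-- Run-length encoding of a digit string. -/
def rle : List ℕ → List (ℕ × ℕ)
  | [] => []
  | a :: t =>
    match rle t with
    | [] => [(a, 1)]
    | (b, n) :: r => if a = b then (b, n + 1) :: r else (a, 1) :: (b, n) :: r

/-- The "look-and-say-the-biggest" map: each maximal run of the digit `a` of length `n`
is replaced by the decimal digits of `max n a` followed by the digit `a`.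
(When `n ≤ 9` this is just the two digits `max n a`, `a`.) -/
def Z (s : List ℕ) : List ℕ :=
  ((rle s).map fun p => (Nat.digits 10 (max p.2 p.1)).reverse ++ [p.1]).flatten

/-- `r` is a run-length representation of the digit string `s`: all run lengths are
positive, consecutive base digits differ, and the expansion of `r` equals `s`. -/
def IsRLE (r : List (ℕ × ℕ)) (s : List ℕ) : Prop :=
  (∀ p ∈ r, 1 ≤ p.2) ∧ (r.map Prod.fst).Chain' (· ≠ ·) ∧
    (r.map fun p => List.replicate p.2 p.1).flatten = s

theorem rle_cons' (a : ℕ) (t : List ℕ) : ∃ n r, rle (a :: t) = (a, n) :: r := by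
  rw [rle]
  split
  · exact ⟨_, _, rfl⟩
  · split
    · rename_i h; subst h; exact ⟨_, _, rfl⟩
    · exact ⟨_, _, rfl⟩

theorem rle_run (a n : ℕ) (t : List ℕ) (h : t.head? ≠ some a) :
    rle (List.replicate (n + 1) a ++ t) = (a, n + 1) :: rle t := by
  induction n with
  | zero =>
    cases t with
    | nil => simp [rle]
    | cons b l =>
      obtain ⟨m, r, hr⟩ := rle_cons' b l
      have : a ≠ b := by rintro rfl; simp at h
      simp only [List.replicate_succ, List.replicate_zero, List.cons_append, List.nil_append]
      rw [rle, hr]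
      simp [this]
  | succ n ih =>
    rw [List.replicate_succ, List.cons_append, rle, ih]
    simp

theorem Z_run (a n : ℕ) (t : List ℕ) (h : t.head? ≠ some a) :
    Z (List.replicate (n + 1) a ++ t) =
      (Nat.digits 10 (max (n + 1) a)).reverse ++ a :: Z t := by
  simp [Z, rle_run a n t h]

theorem run_split (a : ℕ) (l : List ℕ) :
    ∃ n t, l = List.replicate n a ++ t ∧ t.head? ≠ some a := by
  induction l with
  | nil => exact ⟨0, [], by simp⟩
  | cons b l ih =>
    by_cases hb : b = a
    · obtain ⟨n, t, h1, h2⟩ := ih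
      exact ⟨n + 1, t, by simp [List.replicate_succ, hb, h1], h2⟩
    · exact ⟨0, b :: l, by simp, by simpa using hb⟩

theorem run_ind {P : List ℕ → Prop} (h0 : P [])
    (hs : ∀ a n t, t.head? ≠ some a → P t → P (List.replicate (n + 1) a ++ t)) :
    ∀ s, P s := by
  intro s
  induction hl : s.length using Nat.strong_induction_on generalizing s with
  | _ m ih =>
    cases s with
    | nil => exact h0
    | cons a l =>
      obtain ⟨n, t, h1, h2⟩ := run_split a l
      have := hs a n t h2 (ih t.length (by rw [← hl, h1]; simp [Nat.lt_succ_iff]) t rfl)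
      rw [h1]
      simpa [List.replicate_succ] using this

theorem Z_nil : Z [] = [] := by simp [Z, rle]

theorem Z_append (v : List ℕ) : ∀ u : List ℕ,
    (∀ x ∈ u.getLast?, ∀ y ∈ v.head?, x ≠ y) → Z (u ++ v) = Z u ++ Z v := by
  apply run_ind
  · simp [Z_nil]
  · intro a n t ht ih H
    cases t with
    | nil =>
      have hv : v.head? ≠ some a := by
        intro hv
        exact H a (by simp [List.getLast?_replicate]) a (by simp [hv]) rfl
      rw [Z_run a n [] ht, List.append_nil, Z_run a n v hv]
      simp [Z_nil]
    | cons b l =>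
      have h2 : ((b :: l) ++ v).head? ≠ some a := by simpa using ht
      have h3 := ih (by
        intro x hx
        apply H
        simpa [List.getLast?_append] using hx)
      rw [List.append_assoc, Z_run a n _ h2, Z_run a n _ ht, h3]
      simp

theorem Z_last : ∀ u : List ℕ, (Z u).getLast? = u.getLast? := by
  apply run_ind
  · simp [Z_nil]
  · intro a n t ht ih
    rw [Z_run a n t ht]
    cases t with
    | nil => simp [Z_nil, List.getLast?_replicate]
    | cons b l =>
      rw [List.getLast?_append, List.getLast?_append, List.getLast?_cons, ih]
      simp [List.getLast?_cons]

def lead (c : ℕ) : List ℕ → ℕ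
  | [] => 0
  | a :: t => if a = c then lead c t + 1 else 0

def RB (k : ℕ) : List ℕ → Prop
  | [] => True
  | a :: t => (∀ c, lead c (a :: t) ≤ k) ∧ RB k t

theorem RB_length (s : List ℕ) : ∀ k, s.length ≤ k → RB k s := by
  have hl : ∀ c, ∀ s : List ℕ, lead c s ≤ s.length := by
    intro c s
    induction s with
    | nil => simp [lead]
    | cons a t ih => simp only [lead, List.length_cons]; split <;> omega
  induction s with
  | nil => intros; trivial
  | cons a t ih =>
    intro k hk
    exact ⟨fun c => (hl c _).trans hk, ih k (by simp at hk; omega)⟩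

theorem RB_right {k : ℕ} {u v : List ℕ} (h : RB k (u ++ v)) : RB k v := by
  induction u with
  | nil => exact h
  | cons a u ih => exact ih h.2

theorem RB_left {k : ℕ} {u v : List ℕ} (h : RB k (u ++ v)) : RB k u := by
  have hl : ∀ c, ∀ s : List ℕ, lead c s ≤ lead c (s ++ v) := by
    intro c s
    induction s with
    | nil => simp [lead]
    | cons a t ih => simp only [lead, List.cons_append]; split <;> omega
  induction u with
  | nil => trivial
  | cons a u ih => exact ⟨fun c => (hl c _).trans (h.1 c), ih h.2⟩

theorem RB_run {k a n : ℕ} {t : List ℕ} (h : RB k (List.replicate (n + 1) a ++ t)) :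
    n + 1 ≤ k := by
  have hl : ∀ n, n ≤ lead a (List.replicate n a ++ t) := by
    intro n
    induction n with
    | zero => simp
    | succ n ih => simp [List.replicate_succ, lead, ih]
  have h1 := hl (n + 1)
  rw [List.replicate_succ, List.cons_append] at h h1
  exact h1.trans (h.1 a)

theorem lead_bound (c a : ℕ) (x u : List ℕ) :
    lead c (u ++ a :: x) ≤ u.length + 1 + lead a x := by
  induction u with
  | nil =>
    simp only [lead, List.nil_append]
    split
    · rename_i h; subst h; simp only [List.length_nil]; omega
    · omega
  | cons b u ih =>
    simp only [lead, List.cons_append, List.length_cons]; split <;> omega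

theorem lead_bound' (c a : ℕ) (hc : c ≠ a) (x u : List ℕ) :
    lead c (u ++ a :: x) ≤ u.length := by
  induction u with
  | nil => simp [lead, hc.symm]
  | cons b u ih =>
    simp only [lead, List.cons_append, List.length_cons]; split <;> omega

theorem RB_block (k D a : ℕ) (x u : List ℕ) (hu : u.length ≤ D) (hx : lead a x ≤ D)
    (hk : 2 * D + 1 ≤ k) (h : RB k x) : RB k (u ++ a :: x) := by
  induction u with
  | nil => 
    refine ⟨fun c => ?_, h⟩
    refine (lead_bound c a x []).trans ?_
    simp only [List.length_nil]
    omega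
  | cons b u ih =>
    simp only [List.length_cons] at hu
    refine ⟨fun c => ?_, ih (by omega)⟩
    refine (lead_bound c a x (b :: u)).trans ?_
    simp only [List.length_cons]
    omega

theorem RB_Z (k D k' : ℕ) (hD : k < 10 ^ D) (hD1 : 1 ≤ D) (hk : 2 * D + 1 ≤ k') : ∀ s : List ℕ,
    (∀ d ∈ s, d ≤ 9) → RB k s → RB k' (Z s) := by
  have key : ∀ a n : ℕ, a ≤ 9 → n + 1 ≤ k →
      (Nat.digits 10 (max (n + 1) a)).reverse.length ≤ D := by
    intro a n ha hn
    rw [List.length_reverse, Nat.digits_length_le_iff (by norm_num)]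
    have : 10 ^ 1 ≤ 10 ^ D := Nat.pow_le_pow_right (by norm_num) hD1
    apply max_lt <;> omega
  apply run_ind
  · intros; simp [Z_nil, RB]
  · intro a n t ht ih hd hR
    rw [Z_run a n t ht]
    have ha : a ≤ 9 := hd a (by simp)
    have htd : ∀ d ∈ t, d ≤ 9 := fun d h => hd d (by simp [h])
    have hn := RB_run hR
    have hRt := RB_right hR
    refine RB_block k' D a _ _ (key a n ha hn) ?_ hk (ih htd hRt)
    cases t with
    | nil => simp [Z_nil, lead]
    | cons b l =>
      obtain ⟨m, t', h1, h2⟩ := run_split b l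
      have e : b :: l = List.replicate (m + 1) b ++ t' := by simp [h1, List.replicate_succ]
      have hba : a ≠ b := by rintro rfl; simp at ht
      rw [e] at hRt htd ⊢
      rw [Z_run b m t' h2]
      exact (lead_bound' a b hba _ _).trans (key b m (htd b (by simp)) (RB_run hRt))

theorem Z_dig : ∀ s : List ℕ, (∀ d ∈ s, d ≤ 9) → ∀ d ∈ Z s, d ≤ 9 := by
  apply run_ind
  · simp [Z_nil]
  · intro a n t ht ih hd d hdm
    rw [Z_run a n t ht] at hdm
    simp only [List.mem_append, List.mem_reverse, List.mem_cons] at hdm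
    rcases hdm with h | h | h
    · have := Nat.digits_lt_base (by norm_num) h; omega
    · subst h; exact hd d (by simp)
    · exact ih (fun d h => hd d (by simp [h])) d h

def Good (s : List ℕ) : Prop := RB 3 s ∧ ∀ d ∈ s, d ≤ 9

theorem Good_Z {s : List ℕ} (h : Good s) : Good (Z s) :=
  ⟨RB_Z 3 1 3 (by norm_num) (by norm_num) (by norm_num) s h.2 h.1, Z_dig s h.2⟩

theorem eventually_good (k : ℕ) : ∀ s : List ℕ, (∀ d ∈ s, d ≤ 9) → RB k s →
    ∃ N, Good (Z^[N] s) := by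
  induction k using Nat.strong_induction_on with
  | _ k ih =>
    intro s hd hR
    by_cases hk : k ≤ 9
    · exact ⟨1, RB_Z k 1 3 (by omega) (by norm_num) (by norm_num) s hd hR, Z_dig s hd⟩
    · have h1 : k < 10 ^ ((k - 2) / 2) := by
        have : ∀ D, 4 ≤ D → 2 * D + 3 < 10 ^ D := by
          intro D hD
          induction D, hD using Nat.le_induction with
          | base => norm_num
          | succ D _ ih => rw [pow_succ]; omega
        have := this ((k - 2) / 2) (by omega)
        omega
      obtain ⟨N, hN⟩ := ih (k - 1) (by omega) (Z s) (Z_dig s hd)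
        (RB_Z k ((k - 2) / 2) (k - 1) h1 (by omega) (by omega) s hd hR)
      exact ⟨N + 1, hN⟩

def EP (s : List ℕ) : Prop := ∃ N, ∀ n ≥ N, Z^[n + 2] s = Z^[n] s

theorem EP_of (s : List ℕ) (N : ℕ) (h : Z^[N + 2] s = Z^[N] s) : EP s := by
  refine ⟨N, fun n hn => ?_⟩
  obtain ⟨m, rfl⟩ := Nat.exists_eq_add_of_le hn
  rw [show N + m + 2 = m + (N + 2) by omega, Function.iterate_add_apply, h,
    ← Function.iterate_add_apply, add_comm]

theorem Good_run {s : List ℕ} {a n : ℕ} (h : Good (List.replicate (n + 1) a ++ s))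
    (hs : s.head? ≠ some a) :
    Z (List.replicate (n + 1) a ++ s) = max (n + 1) a :: a :: Z s := by
  have h1 := RB_run h.1
  have h2 := h.2 a (by simp)
  rw [Z_run a n s hs, Nat.digits_of_lt _ _ (by omega) (by apply max_lt <;> omega)]
  simp

theorem head_Z {v : List ℕ} (h : Good v) (b : ℕ) (hb : ∀ y ∈ v.head?, b < y) :
    ∀ y ∈ (Z v).head?, b < y := by
  cases v with
  | nil => simp [Z_nil]
  | cons a l =>
    obtain ⟨n, t, h1, h2⟩ := run_split a l
    have e : a :: l = List.replicate (n + 1) a ++ t := by simp [h1, List.replicate_succ]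
    have hba : b < a := hb a (by simp)
    rw [e] at h ⊢
    rw [Good_run h h2]
    simp
    omega

theorem lt_Z (c : ℕ) (hc : 4 ≤ c) : ∀ v : List ℕ, Good v → (∀ y ∈ v, y < c) →
    ∀ y ∈ Z v, y < c := by
  apply run_ind
  · simp [Z_nil]
  · intro a n t ht ih hg hy
    rw [Good_run hg ht]
    have h1 := RB_run hg.1
    have h2 := hy a (by simp)
    have h3 := ih ⟨RB_right hg.1, fun d hd => hg.2 d (by simp [hd])⟩
      (fun d hd => hy d (by simp [hd]))
    intro y hy
    simp only [List.mem_cons] at hy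
    rcases hy with h | h | h
    · omega
    · omega
    · exact h3 y h

theorem EP_append (I : List ℕ → List ℕ → Prop)
    (hI : ∀ u v, I u v → I (Z u) (Z v))
    (hne : ∀ u v, I u v → ∀ x ∈ u.getLast?, ∀ y ∈ v.head?, x ≠ y)
    (u v : List ℕ) (h : I u v) (hu : EP u) (hv : EP v) : EP (u ++ v) := by
  have key : ∀ n u v, I u v → Z^[n] (u ++ v) = Z^[n] u ++ Z^[n] v := by
    intro n
    induction n with
    | zero => intros; rfl
    | succ n ih =>
      intro u v h
      rw [Function.iterate_succ_apply, Z_append v u (hne u v h), ih _ _ (hI u v h)]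
      rfl
  obtain ⟨N, hN⟩ := hu
  obtain ⟨M, hM⟩ := hv
  refine ⟨max N M, fun n hn => ?_⟩
  rw [key _ _ _ h, key _ _ _ h, hN n (le_trans (le_max_left _ _) hn),
    hM n (le_trans (le_max_right _ _) hn)]

theorem EP_ascent (u v : List ℕ) (b : ℕ) (hu : EP u) (hv : EP v) (hg : Good v)
    (h1 : u.getLast? = some b) (h2 : ∀ y ∈ v.head?, b < y) : EP (u ++ v) := by
  refine EP_append (fun u v => Good v ∧ u.getLast? = some b ∧ ∀ y ∈ v.head?, b < y)
    ?_ ?_ u v ⟨hg, h1, h2⟩ hu hv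
  · rintro u v ⟨hg, h1, h2⟩
    exact ⟨Good_Z hg, by rw [Z_last, h1], head_Z hg b h2⟩
  · rintro u v ⟨hg, h1, h2⟩ x hx y hy
    have := h2 y hy
    rw [h1] at hx
    simp at hx
    omega

theorem EP_big (u v : List ℕ) (b : ℕ) (hb : 4 ≤ b) (hu : EP u) (hv : EP v) (hg : Good v)
    (h1 : u.getLast? = some b) (h2 : ∀ y ∈ v, y < b) : EP (u ++ v) := by
  refine EP_append (fun u v => Good v ∧ u.getLast? = some b ∧ ∀ y ∈ v, y < b)
    ?_ ?_ u v ⟨hg, h1, h2⟩ hu hv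
  · rintro u v ⟨hg, h1, h2⟩
    exact ⟨Good_Z hg, by rw [Z_last, h1], lt_Z b hb v hg h2⟩
  · rintro u v ⟨hg, h1, h2⟩ x hx y hy
    have := h2 y (List.mem_of_mem_head? hy)
    rw [h1] at hx
    simp at hx
    omega

theorem sorted_split (b : ℕ) (s : List ℕ) (hs : s.Pairwise (· ≥ ·)) (hd : ∀ d ∈ s, d ≤ b)
    (hR : RB 3 s) : ∃ (n : Fin 4) (t : List ℕ), s = List.replicate n.1 b ++ t ∧
      t.Pairwise (· ≥ ·) ∧ (∀ d ∈ t, d < b) ∧ RB 3 t := by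
  obtain ⟨n, t, h1, h2⟩ := run_split b s
  subst h1
  have hp := (List.pairwise_append.1 hs).2.1
  have hn : n < 4 := by
    cases n with
    | zero => norm_num
    | succ n => have := RB_run hR; omega
  refine ⟨⟨n, hn⟩, t, rfl, hp, ?_, RB_right hR⟩
  cases t with
  | nil => simp
  | cons a l =>
    have ha := hd a (by simp)
    have hab : a ≠ b := by simpa using h2
    intro d hdm
    simp only [List.mem_cons] at hdm
    rcases hdm with h | h
    · omega
    · have := (List.pairwise_cons.1 hp).1 d h
      omega

set_option maxRecDepth 100000 in
theorem small_cases : ∀ i j k l : Fin 4,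
    let w := List.replicate i.1 3 ++ (List.replicate j.1 2 ++
      (List.replicate k.1 1 ++ List.replicate l.1 0))
    Z^[6 + 2] w = Z^[6] w := by
  decide +kernel

theorem EP_small (s : List ℕ) (hs : s.Pairwise (· ≥ ·)) (hd : ∀ d ∈ s, d ≤ 3)
    (hR : RB 3 s) : EP s := by
  obtain ⟨i, s1, rfl, p1, d1, r1⟩ := sorted_split 3 s hs hd hR
  obtain ⟨j, s2, rfl, p2, d2, r2⟩ := sorted_split 2 s1 p1 (fun d h => by have := d1 d h; omega) r1
  obtain ⟨k, s3, rfl, p3, d3, r3⟩ := sorted_split 1 s2 p2 (fun d h => by have := d2 d h; omega) r2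
  obtain ⟨l, s4, rfl, p4, d4, r4⟩ := sorted_split 0 s3 p3 (fun d h => by have := d3 d h; omega) r3
  have : s4 = [] := List.eq_nil_iff_forall_not_mem.2 fun d h => by have := d4 d h; omega
  subst this
  rw [List.append_nil]
  exact EP_of _ 6 (small_cases i j k l)

theorem EP_rep (a n : ℕ) (ha : 4 ≤ a) (hg : Good (List.replicate (n + 1) a)) :
    EP (List.replicate (n + 1) a) := by
  have h : ∀ m, m + 1 ≤ 3 → Z (List.replicate (m + 1) a) = [a, a] := by
    intro m hm
    have h9 := hg.2 a (by simp)
    have := Z_run a m [] (by simp)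
    rw [List.append_nil, max_eq_right (by omega), Nat.digits_of_lt _ _ (by omega) (by omega)]
      at this
    simpa [Z_nil] using this
  have hn : n + 1 ≤ 3 := by
    have := hg.1
    rw [← List.append_nil (List.replicate (n + 1) a)] at this
    exact RB_run this
  have h2 : Z [a, a] = [a, a] := h 1 (by norm_num)
  apply EP_of _ 1
  simp only [Function.iterate_succ_apply, Function.iterate_zero_apply, h n hn, h2]

theorem EP_good (s : List ℕ) (hg : Good s) : EP s := by
  induction hl : s.length using Nat.strong_induction_on generalizing s with
  | _ m ih =>
    by_cases hs : s.Pairwise (· ≥ ·)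
    · cases s with
      | nil => exact EP_of _ 0 (by simp [Z_nil])
      | cons a l =>
        by_cases ha : a ≤ 3
        · refine EP_small _ hs ?_ hg.1
          intro d hd
          simp only [List.mem_cons] at hd
          rcases hd with h | h
          · omega
          · have := (List.pairwise_cons.1 hs).1 d h
            omega
        · obtain ⟨n, t, h1, h2, h3, h4⟩ := sorted_split a (a :: l) hs (by
            intro d hd
            simp only [List.mem_cons] at hd
            rcases hd with h | h
            · omega
            · exact (List.pairwise_cons.1 hs).1 d h) hg.1
          rw [h1] at hg hl ⊢
          obtain ⟨n, hn⟩ := n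
          cases n with
          | zero =>
            simp only [List.replicate_zero, List.nil_append] at h1
            have := h3 a (by simp [← h1])
            omega
          | succ n =>
            have hgt : Good t := ⟨h4, fun d hd => hg.2 d (by simp [hd])⟩
            refine EP_big _ t a (by omega) (EP_rep a n (by omega)
              ⟨RB_left hg.1, fun d hd => hg.2 d (List.mem_append_left _ hd)⟩)
              (ih t.length (by rw [← hl]; simp) t hgt rfl) hgt
              (by simp [List.getLast?_replicate]) h3
    · rw [← List.isChain_iff_pairwise, List.isChain_iff_forall_rel_of_append_cons_cons] at hs
      push Not at hs
      obtain ⟨a, b, l1, l2, e, hab⟩ := hs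
      have e' : s = (l1 ++ [a]) ++ (b :: l2) := by simp [e]
      subst e'
      have g2 : Good (b :: l2) := ⟨RB_right hg.1, fun d hd => hg.2 d (List.mem_append_right _ hd)⟩
      have g1 : Good (l1 ++ [a]) := ⟨RB_left hg.1, fun d hd => hg.2 d (List.mem_append_left _ hd)⟩
      refine EP_ascent _ _ a (ih _ ?_ _ g1 rfl) (ih _ ?_ _ g2 rfl) g2 (by simp) (by
        simpa using hab)
      · rw [← hl]; simp
      · rw [← hl]; simp; omega

/-- Eventual periodicity of LSB: for every nonempty digit string `s`, the sequence
`s, Z(s), Z²(s), …` is eventually periodic with period at most 9. -/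
theorem LSB_eventually_periodic (s : List ℕ) (hs : s ≠ []) (hdig : ∀ d ∈ s, d ≤ 9) :
    ∃ N, ∃ τ, 1 ≤ τ ∧ τ ≤ 9 ∧ ∀ n ≥ N, Z^[n + τ] s = Z^[n] s := by
  obtain ⟨N, hN⟩ := eventually_good s.length s hdig (RB_length s _ le_rfl)
  obtain ⟨M, hM⟩ := EP_good _ hN
  refine ⟨M + N, 2, by norm_num, by norm_num, fun n hn => ?_⟩
  have := hM (n - N) (by omega)
  rw [← Function.iterate_add_apply, ← Function.iterate_add_apply] at this
  rwa [show n - N + 2 + N = n + 2 by omega, show n - N + N = n by omega] at this
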